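/- arXiv:2502.10335 — 2 statements merged into one kernel-verified Lean document; each statement's English description precedes it below -/
import Mathlib

section
/- For every complex number s with real part greater than 1, the Dirichlet series over squarefree positive integers satisfies ∑_{n squarefree} n^{-s} = ζ(s)/ζ(2s), where ζ denotes the Riemann zeta function. -/
/-!
Every positive integer is uniquely `a * b ^ 2` with `a` squarefree and `b` positive. Hence, for a
completely multiplicative `f` with `∑ ‖f n‖ < ∞`, the series `∑ f n` factors as
`(∑ f a) * ∑ f (b ^ 2)`. For `f n = n ^ (-s)` the second factor is `ζ(2s)`, which does not vanish.
-/

theorem sq_dvd_mul_sq_iff_of_squarefree {α : Type*} [CommMonoidWithZero α] [GCDMonoid α]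
    {a b d : α} (ha : Squarefree a) : d ^ 2 ∣ a * b ^ 2 ↔ d ∣ b := by
  refine ⟨fun h => ?_, fun h => (pow_dvd_pow_of_dvd h 2).mul_left a⟩
  obtain ⟨d', b', hd, hb, hunit⟩ := extract_gcd d b
  rcases eq_or_ne (gcd d b) 0 with hg | hg
  · simp [((gcd_eq_zero_iff d b).mp hg).2]
  have hdvd : d' ^ 2 ∣ a * b' ^ 2 := by
    rw [← mul_dvd_mul_iff_left (pow_ne_zero 2 hg), mul_left_comm, ← mul_pow, ← mul_pow, ← hd, ← hb]
    exact h
  have hcoprime : IsRelPrime (d' ^ 2) (b' ^ 2) := (gcd_isUnit_iff_isRelPrime.mp hunit).pow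
  have hd' : IsUnit d' := ha d' (sq d' ▸ hcoprime.dvd_of_dvd_mul_right hdvd)
  rw [hd, hd'.mul_right_dvd]
  exact gcd_dvd_right d b

theorem squarefree_mul_sq_injective :
    Function.Injective fun p : {n : ℕ // Squarefree n} × ℕ+ => (p.1 : ℕ) * (p.2 : ℕ) ^ 2 := by
  rintro ⟨⟨a, ha⟩, b⟩ ⟨⟨c, hc⟩, d⟩ (h : a * (b : ℕ) ^ 2 = c * (d : ℕ) ^ 2)
  have hbd : (b : ℕ) = d := eq_of_forall_dvd' fun k => by
    rw [← sq_dvd_mul_sq_iff_of_squarefree ha, h, sq_dvd_mul_sq_iff_of_squarefree hc]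
  obtain rfl : b = d := PNat.eq hbd
  obtain rfl : a = c := Nat.eq_of_mul_eq_mul_right (pow_pos b.pos 2) h
  rfl

theorem exists_squarefree_mul_sq_eq {n : ℕ} (hn : n ≠ 0) :
    ∃ p : {n : ℕ // Squarefree n} × ℕ+, (p.1 : ℕ) * (p.2 : ℕ) ^ 2 = n := by
  obtain ⟨a, b, -, hb, h, ha⟩ := Nat.sq_mul_squarefree_of_pos (Nat.pos_of_ne_zero hn)
  exact ⟨(⟨a, ha⟩, ⟨b, hb⟩), (mul_comm a (b ^ 2)).trans h⟩

theorem tsum_squarefree_mul_tsum_sq {R : Type*} [NormedRing R] [CompleteSpace R] (f : ℕ →*₀ R)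
    (hf : Summable fun n => ‖f n‖) :
    (∑' a : {n : ℕ // Squarefree n}, f a) * ∑' b : ℕ, f (b ^ 2) = ∑' n : ℕ, f n := by
  have hsqfree : Summable fun a : {n : ℕ // Squarefree n} => ‖f a‖ :=
    hf.comp_injective Subtype.val_injective
  have hsq : Summable fun b : ℕ+ => ‖f ((b : ℕ) ^ 2)‖ :=
    hf.comp_injective ((Nat.pow_left_injective two_ne_zero).comp PNat.coe_injective)
  have hsupport : Function.support f ⊆
      Set.range fun p : {n : ℕ // Squarefree n} × ℕ+ => (p.1 : ℕ) * (p.2 : ℕ) ^ 2 :=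
    fun n hn => exists_squarefree_mul_sq_eq fun h => hn (by rw [h, map_zero])
  calc (∑' a : {n : ℕ // Squarefree n}, f a) * ∑' b : ℕ, f (b ^ 2)
      = (∑' a : {n : ℕ // Squarefree n}, f a) * ∑' b : ℕ+, f ((b : ℕ) ^ 2) := by
        rw [tsum_pnat_eq_tsum_of_eq_zero (f := fun b => f (b ^ 2)) (by simp)]
    _ = ∑' p : {n : ℕ // Squarefree n} × ℕ+, f p.1 * f ((p.2 : ℕ) ^ 2) :=
        tsum_mul_tsum_of_summable_norm hsqfree hsq
    _ = ∑' p : {n : ℕ // Squarefree n} × ℕ+, f ((p.1 : ℕ) * (p.2 : ℕ) ^ 2) := by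
        simp only [map_mul]
    _ = ∑' n : ℕ, f n := squarefree_mul_sq_injective.tsum_eq hsupport

theorem tsum_natCast_pow_cpow_neg (k : ℕ) {s : ℂ} (hs : 1 < (k * s).re) :
    ∑' n : ℕ, ((n ^ k : ℕ) : ℂ) ^ (-s) = riemannZeta (k * s) := by
  rw [← tsum_riemannZetaSummand hs]
  refine tsum_congr fun n => ?_
  rw [Nat.cast_pow, ← Complex.natCast_cpow_natCast_mul, mul_neg]
  rfl

/-- For every complex number `s` with real part greater than 1, the Dirichlet series over
squarefree positive integers satisfies `∑_{n squarefree} n^{-s} = ζ(s)/ζ(2s)`. -/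
theorem squarefree_dirichlet_series (s : ℂ) (hs : 1 < s.re) :
    ∑' n : {n : ℕ // Squarefree n}, ((n : ℕ) : ℂ) ^ (-s)
      = riemannZeta s / riemannZeta (2 * s) := by
  have h2s : 1 < (2 * s).re := by
    simp only [Complex.mul_re, Complex.re_ofNat, Complex.im_ofNat, zero_mul, sub_zero]
    linarith
  have hs0 : s ≠ 0 := Complex.ne_zero_of_one_lt_re hs
  have hsq : ∑' n : ℕ, riemannZetaSummandHom hs0 (n ^ 2) = riemannZeta (2 * s) :=
    tsum_natCast_pow_cpow_neg 2 h2s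
  have hfactor : (∑' n : {n : ℕ // Squarefree n}, ((n : ℕ) : ℂ) ^ (-s)) * riemannZeta (2 * s)
      = riemannZeta s := by
    rw [← hsq, ← tsum_riemannZetaSummand hs]
    exact tsum_squarefree_mul_tsum_sq _ (summable_riemannZetaSummand hs)
  exact eq_div_of_mul_eq (riemannZeta_ne_zero_of_one_lt_re h2s) hfactor
end

section
/- Let {p₁, …, p_N} and {q₁, …, q_M} be two disjoint finite sets of primes. The natural density of the set of squarefree positive integers n that are divisible by every p_i and divisible by none of the q_j equals (∏_{i=1}^{N} 1/(p_i + 1)) · (∏_{j=1}^{M} q_j/(q_j + 1)) · (6/π²). -/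
/-!
With `a = ∏ P` and `b = ∏ Q`, the integers to be counted are the `a * m` with `m` squarefree and
prime to `a * b`, so their density is `1 / a` times that of the squarefree integers prime to
`N = a * b`.

The latter are counted with weights: let `f` be a bounded completely multiplicative function with
mean value `M`. Since `∑ μ(d)` over `d² ∣ n` is the indicator of squarefreeness,
`∑ f(n)` over squarefree `n ≤ X` equals `∑ μ(d) f(d²) F(X / d²)`, where `F` is the summatory
function of `f`; by dominated convergence this is asymptotic to `M X ∑ μ(d) f(d²) / d²`. For `f` the
trivial character modulo `N` we have `M = φ(N) / N = ∏ (1 - 1 / p)`, and the series is the inverse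
of `L(f, 2) = ζ(2) ∏ (1 - 1 / p²)`, both products being over the primes `p ∣ N`. The density is thus
`(6 / π²) ∏ p / (p + 1)`.
-/

open Filter Finset Topology
open scoped ArithmeticFunction.Moebius

lemma sum_Icc_filter_dvd {R : Type*} [AddCommMonoid R] (f : ℕ → R) {k : ℕ} (hk : 0 < k) (X : ℕ) :
    ∑ n ∈ Icc 1 X with k ∣ n, f n = ∑ m ∈ Icc 1 (X / k), f (k * m) := by
  symm
  refine sum_bij (fun m _ => k * m) ?_ (fun _ _ _ _ => Nat.eq_of_mul_eq_mul_left hk) ?_ ?_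
  · intro m hm
    rw [mem_Icc, Nat.le_div_iff_mul_le hk, mul_comm] at hm
    exact mem_filter.mpr ⟨mem_Icc.mpr ⟨Nat.mul_pos hk hm.1, hm.2⟩, dvd_mul_right k m⟩
  · simp only [mem_filter, mem_Icc]
    rintro _ ⟨⟨h1, hX⟩, m, rfl⟩
    exact ⟨m, ⟨Nat.pos_of_mul_pos_left h1, (Nat.le_div_iff_mul_le hk).mpr (by linarith)⟩, rfl⟩
  · exact fun _ _ => rfl

lemma sum_Ico_add_of_periodic {R : Type*} [AddCommMonoid R] {f : ℕ → R} {N : ℕ}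
    (hf : f.Periodic N) (n : ℕ) : ∑ i ∈ Ico n (n + N), f i = ∑ i ∈ range N, f i := by
  rw [← Nat.image_Ico_mod n N, sum_image (Nat.mod_injOn_Ico n N)]
  simp only [hf.map_mod_nat]

section MeanValue

variable {𝕜 : Type*} [RCLike 𝕜] {f : ℕ → 𝕜} {M : 𝕜}

/-- `f` has mean value `M` over the positive integers: its averages over `[1, X]` tend to `M`.
For the indicator function of a set this says that the set has natural density `M`. -/
def HasMeanValue (f : ℕ → 𝕜) (M : 𝕜) : Prop :=
  Tendsto (fun X : ℕ => (∑ n ∈ Icc 1 X, f n) / X) atTop (𝓝 M)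

lemma hasMeanValue_ofReal_iff {g : ℕ → ℝ} {m : ℝ} :
    HasMeanValue (fun n => (g n : ℂ)) m ↔ HasMeanValue g m := by
  simp only [HasMeanValue, ← tendsto_ofReal_iff (f := fun X : ℕ => (∑ n ∈ Icc 1 X, g n) / X)]
  push_cast
  rfl

lemma tendsto_natCast_div_div (k : ℕ) :
    Tendsto (fun X : ℕ => ((X / k : ℕ) : 𝕜) / X) atTop (𝓝 (1 / k)) := by
  have h := (tendsto_nat_floor_mul_div_atTop (R := ℝ) (a := 1 / (k : ℝ)) (by positivity)).comp
    tendsto_natCast_atTop_atTop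
  simpa [Function.comp_def, inv_mul_eq_div, Nat.floor_div_eq_div] using
    (RCLike.continuous_ofReal (K := 𝕜)).continuousAt.tendsto.comp h

lemma HasMeanValue.tendsto_sum_div (hf : HasMeanValue f M) (k : ℕ) :
    Tendsto (fun X : ℕ => (∑ n ∈ Icc 1 (X / k), f n) / X) atTop (𝓝 (M / k)) := by
  obtain rfl | hk := eq_or_ne k 0
  · simp
  have h := (hf.comp (Nat.tendsto_div_const_atTop hk)).mul (tendsto_natCast_div_div (𝕜 := 𝕜) k)
  rw [mul_one_div] at h
  refine h.congr fun X => ?_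
  obtain hX | hX := eq_or_ne (X / k) 0
  · simp [hX]
  · exact div_mul_div_cancel₀ (Nat.cast_ne_zero.mpr hX)

lemma hasMeanValue_of_periodic {N : ℕ} (hN : N ≠ 0) (hf : f.Periodic N) :
    HasMeanValue f ((∑ n ∈ range N, f n) / N) := by
  set A := (∑ n ∈ range N, f n) / N with hA
  let e : ℕ → 𝕜 := fun X => ∑ n ∈ Icc 1 X, f n - X * A
  have e_periodic : e.Periodic N := fun X => by
    have hsum : ∑ n ∈ Icc 1 (X + N), f n = ∑ n ∈ Icc 1 X, f n + N * A := by
      rw [hA, mul_div_cancel₀ _ (Nat.cast_ne_zero.mpr hN), ← sum_Ico_add_of_periodic hf (X + 1)]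
      simp only [← Ico_add_one_right_eq_Icc, add_right_comm X N 1]
      exact (sum_Ico_consecutive f (by lia) (by lia)).symm
    simp only [e, hsum]
    push_cast
    ring
  have e_bounded (X : ℕ) : ‖e X‖ ≤ ∑ i ∈ range N, ‖e i‖ := by
    rw [← e_periodic.map_mod_nat X]
    exact single_le_sum (f := fun i => ‖e i‖) (fun _ _ => norm_nonneg _)
      (mem_range.mpr (Nat.mod_lt X (Nat.pos_of_ne_zero hN)))
  have e_div : Tendsto (fun X : ℕ => e X / X) atTop (𝓝 0) := by
    refine squeeze_zero_norm (fun X => ?_)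
      (tendsto_const_div_atTop_nhds_zero_nat (∑ i ∈ range N, ‖e i‖))
    rw [norm_div, RCLike.norm_natCast]
    gcongr
    exact e_bounded X
  refine (zero_add A ▸ e_div.add_const A).congr' ?_
  filter_upwards [eventually_ne_atTop 0] with X hX
  have : (X : 𝕜) ≠ 0 := Nat.cast_ne_zero.mpr hX
  simp only [e]
  field_simp
  ring

lemma norm_sum_Icc_le {C : ℝ} (hf : ∀ n, ‖f n‖ ≤ C) (X : ℕ) :
    ‖∑ n ∈ Icc 1 X, f n‖ ≤ X * C := by
  simpa using norm_sum_le_of_le (Icc 1 X) fun n _ => hf n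

lemma HasMeanValue.tendsto_tsum_mul_sum_div (hf : HasMeanValue f M) {C : ℝ}
    (hC : ∀ n, ‖f n‖ ≤ C) {g : ℕ → 𝕜} {k : ℕ → ℕ} (hg : Summable fun d => ‖g d‖ / k d) :
    Tendsto (fun X : ℕ => (∑' d, g d * ∑ n ∈ Icc 1 (X / k d), f n) / X) atTop
      (𝓝 (M * ∑' d, g d / k d)) := by
  have hC0 : 0 ≤ C := (norm_nonneg (f 0)).trans (hC 0)
  simp_rw [← tsum_div_const, mul_div_assoc, ← tsum_mul_left, mul_div_left_comm M]
  refine tendsto_tsum_of_dominated_convergence (hg.mul_right C)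
    (fun d => (hf.tendsto_sum_div (k d)).const_mul (g d)) (Eventually.of_forall fun X d => ?_)
  rw [norm_mul, norm_div, RCLike.norm_natCast, div_mul_eq_mul_div, mul_div_assoc]
  refine mul_le_mul_of_nonneg_left ?_ (norm_nonneg _)
  calc ‖∑ n ∈ Icc 1 (X / k d), f n‖ / X
      ≤ (X / k d : ℕ) * C / X := by gcongr; exact norm_sum_Icc_le hC _
    _ ≤ X / k d * C / X := by gcongr; exact Nat.cast_div_le
    _ = X / X * (C / k d) := by ring
    _ ≤ C / k d := mul_le_of_le_one_left (by positivity) (div_self_le_one _)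

end MeanValue

lemma sq_dvd_sq_mul_iff_of_squarefree {a b d : ℕ} (ha : Squarefree a) :
    d ^ 2 ∣ b ^ 2 * a ↔ d ∣ b := by
  refine ⟨fun h => ?_, fun h => (pow_dvd_pow_of_dvd h 2).mul_right a⟩
  obtain hg | hg := Nat.eq_zero_or_pos (d.gcd b)
  · simp [Nat.eq_zero_of_gcd_eq_zero_right hg]
  obtain ⟨d', b', hcop, hd, hb⟩ := Nat.exists_coprime d b
  have hd' : d' ^ 2 ∣ a := by
    have h' : d' ^ 2 * d.gcd b ^ 2 ∣ b' ^ 2 * a * d.gcd b ^ 2 := by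
      rwa [mul_right_comm, ← mul_pow, ← mul_pow, ← hd, ← hb]
    exact (hcop.pow 2 2).dvd_of_dvd_mul_left (Nat.dvd_of_mul_dvd_mul_right (pow_pos hg 2) h')
  have : d' = 1 := Nat.isUnit_iff.mp (ha d' (sq d' ▸ hd'))
  rw [hd, this, one_mul]
  exact Nat.gcd_dvd_right d b

lemma sum_moebius_sq_dvd {n X : ℕ} (hn : n ≠ 0) (hX : n ≤ X) :
    ∑ d ∈ Icc 1 X with d ^ 2 ∣ n, μ d = if Squarefree n then 1 else 0 := by
  obtain ⟨a, b, rfl, ha⟩ := Nat.sq_mul_squarefree n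
  have hb : b ≠ 0 := by
    rintro rfl
    simp at hn
  have hfilter : {d ∈ Icc 1 X | d ^ 2 ∣ b ^ 2 * a} = b.divisors := by
    ext d
    simp only [mem_filter, mem_Icc, Nat.mem_divisors, sq_dvd_sq_mul_iff_of_squarefree ha]
    have hbX : b ≤ X := (Nat.le_of_dvd (Nat.pos_of_ne_zero hn)
      ((dvd_pow_self b two_ne_zero).mul_right a)).trans hX
    exact ⟨fun h => ⟨h.2, hb⟩, fun h => ⟨⟨Nat.pos_of_dvd_of_pos h.1 (Nat.pos_of_ne_zero hb),
      (Nat.le_of_dvd (Nat.pos_of_ne_zero hb) h.1).trans hbX⟩, h.1⟩⟩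
  have hsq : Squarefree (b ^ 2 * a) ↔ b = 1 :=
    ⟨fun h => Nat.isUnit_iff.mp (h b ⟨a, by ring⟩), fun h => by simpa [h] using ha⟩
  simp only [hfilter, hsq, ← ArithmeticFunction.coe_mul_zeta_apply,
    ArithmeticFunction.moebius_mul_coe_zeta, ArithmeticFunction.one_apply]

lemma sum_squarefree_eq_sum_moebius_mul {R : Type*} [CommRing R] {f : ℕ → R}
    (hf : ∀ m n, f (m * n) = f m * f n) (X : ℕ) :
    ∑ n ∈ Icc 1 X, (if Squarefree n then f n else 0)
      = ∑ d ∈ Icc 1 X, f (d ^ 2) * μ d * ∑ m ∈ Icc 1 (X / d ^ 2), f m := by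
  calc ∑ n ∈ Icc 1 X, (if Squarefree n then f n else 0)
      = ∑ n ∈ Icc 1 X, ∑ d ∈ Icc 1 X, if d ^ 2 ∣ n then (μ d : R) * f n else 0 := by
        refine sum_congr rfl fun n hn => ?_
        rw [mem_Icc, Nat.one_le_iff_ne_zero] at hn
        have h := congrArg (fun z : ℤ => (z : R) * f n) (sum_moebius_sq_dvd hn.1 hn.2)
        simpa [sum_mul, sum_filter] using h.symm
    _ = ∑ d ∈ Icc 1 X, ∑ n ∈ Icc 1 X with d ^ 2 ∣ n, μ d * f n := by
        rw [sum_comm]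
        simp only [sum_filter]
    _ = ∑ d ∈ Icc 1 X, f (d ^ 2) * μ d * ∑ m ∈ Icc 1 (X / d ^ 2), f m := by
        refine sum_congr rfl fun d hd => ?_
        rw [sum_Icc_filter_dvd _ (pow_pos (mem_Icc.mp hd).1 2), mul_sum]
        exact sum_congr rfl fun m _ => by rw [hf]; ring

theorem HasMeanValue.ite_squarefree {f : ℕ → ℂ} {M : ℂ} (hM : HasMeanValue f M)
    (hf : ∀ m n, f (m * n) = f m * f n) (hf1 : ∀ n, ‖f n‖ ≤ 1) :
    HasMeanValue (fun n => if Squarefree n then f n else 0)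
      (M * LSeries (fun d => f (d ^ 2) * μ d) 2) := by
  have hterm (d : ℕ) : f (d ^ 2) * μ d / (d ^ 2 : ℕ)
      = LSeries.term (fun d => f (d ^ 2) * μ d) 2 d := by
    obtain rfl | hd := eq_or_ne d 0
    · simp
    · simp [LSeries.term_of_ne_zero hd]
  have hsummable : Summable fun d : ℕ => ‖f (d ^ 2) * μ d‖ / (d ^ 2 : ℕ) := by
    refine (Real.summable_one_div_nat_pow.mpr one_lt_two).of_nonneg_of_le
      (fun d => by positivity) fun d => ?_
    have hμ : ‖(μ d : ℂ)‖ ≤ 1 := by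
      rw [Complex.norm_intCast]
      exact_mod_cast ArithmeticFunction.abs_moebius_le_one
    push_cast
    rw [norm_mul]
    gcongr
    exact mul_le_one₀ (hf1 _) (norm_nonneg _) hμ
  have h := hM.tendsto_tsum_mul_sum_div hf1 hsummable
  simp only [hterm] at h
  refine h.congr fun X => ?_
  rw [sum_squarefree_eq_sum_moebius_mul hf, tsum_eq_sum fun d hd => ?_]
  obtain rfl | hd0 := Nat.eq_zero_or_pos d
  · simp
  · have hXd : X < d := by simpa [Nat.one_le_iff_ne_zero, hd0.ne'] using hd
    simp [Nat.div_eq_of_lt (hXd.trans_le (Nat.le_self_pow two_ne_zero d))]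

section TrivialCharacter

variable (N : ℕ)

lemma prod_primeFactors_one_sub_inv_mul :
    (∏ p ∈ N.primeFactors, (1 - (p : ℂ)⁻¹)) * ∏ p ∈ N.primeFactors, (1 - (p : ℂ)⁻¹ ^ 2)⁻¹
      = ∏ p ∈ N.primeFactors, (p : ℂ) / (p + 1) := by
  rw [← prod_mul_distrib]
  refine prod_congr rfl fun p hp => ?_
  have hp' := Nat.prime_of_mem_primeFactors hp
  have h0 : (p : ℂ) ≠ 0 := Nat.cast_ne_zero.mpr hp'.ne_zero
  have h1 : (p : ℂ) - 1 ≠ 0 := sub_ne_zero.mpr (Nat.cast_ne_one.mpr hp'.ne_one)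
  have h2 : (p : ℂ) + 1 ≠ 0 := Nat.cast_add_one_ne_zero p
  have h3 : (p : ℂ) ^ 2 - 1 = (p - 1) * (p + 1) := by ring
  field_simp
  rw [h3]
  field_simp

lemma one_dirichletCharacter_natCast (n : ℕ) :
    (1 : DirichletCharacter ℂ N) n = if n.Coprime N then 1 else 0 := by
  split_ifs with h
  · exact MulChar.one_apply ((ZMod.isUnit_iff_coprime n N).mpr h)
  · exact MulChar.map_nonunit _ (mt (ZMod.isUnit_iff_coprime n N).mp h)

variable [NeZero N]

lemma hasMeanValue_one_dirichletCharacter :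
    HasMeanValue (fun n : ℕ => (1 : DirichletCharacter ℂ N) n)
      (∏ p ∈ N.primeFactors, (1 - (p : ℂ)⁻¹)) := by
  have hφ : (∑ n ∈ range N, (1 : DirichletCharacter ℂ N) n) / N
      = ∏ p ∈ N.primeFactors, (1 - (p : ℂ)⁻¹) := by
    have h := congrArg (Rat.cast : ℚ → ℂ) (Nat.totient_eq_mul_prod_factors N)
    push_cast at h
    rw [div_eq_iff (NeZero.ne _), mul_comm, ← h, Nat.totient_eq_card_coprime]
    simp [one_dirichletCharacter_natCast, Nat.coprime_comm]
  rw [← hφ]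
  exact hasMeanValue_of_periodic (NeZero.ne N) fun n => by simp

lemma LSeries_one_dirichletCharacter_mul_moebius :
    LSeries (fun d : ℕ => (1 : DirichletCharacter ℂ N) d * μ d) 2
      = (∏ p ∈ N.primeFactors, (1 - (p : ℂ)⁻¹ ^ 2)⁻¹) * (6 / Real.pi ^ 2) := by
  have hs : 1 < (2 : ℂ).re := by norm_num
  calc LSeries (fun d : ℕ => (1 : DirichletCharacter ℂ N) d * μ d) 2
      = (LSeries (fun d : ℕ => (1 : DirichletCharacter ℂ N) d) 2)⁻¹ :=
        eq_inv_of_mul_eq_one_right (DirichletCharacter.LSeries.mul_mu_eq_one 1 hs)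
    _ = ((∏ p ∈ N.primeFactors, (1 - (p : ℂ) ^ (-2 : ℂ))) * riemannZeta 2)⁻¹ := by
        rw [← DirichletCharacter.LFunction_eq_LSeries 1 hs,
          ← DirichletCharacter.LFunctionTrivChar_eq_mul_riemannZeta (by norm_num)]
    _ = (∏ p ∈ N.primeFactors, (1 - (p : ℂ)⁻¹ ^ 2)⁻¹) * (6 / Real.pi ^ 2) := by
        simp [riemannZeta_two, Complex.cpow_neg, mul_comm]

lemma hasMeanValue_squarefree_coprime :
    HasMeanValue (fun n => if Squarefree n ∧ n.Coprime N then (1 : ℝ) else 0)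
      ((∏ p ∈ N.primeFactors, (p : ℝ) / (p + 1)) * (6 / Real.pi ^ 2)) := by
  have h := (hasMeanValue_one_dirichletCharacter N).ite_squarefree
    (fun m n => by simp) fun n => DirichletCharacter.norm_le_one _ (n : ZMod N)
  have hsq (d : ℕ) : (1 : DirichletCharacter ℂ N) (d ^ 2 : ℕ) = (1 : DirichletCharacter ℂ N) d := by
    simp [one_dirichletCharacter_natCast]
  simp only [hsq, LSeries_one_dirichletCharacter_mul_moebius, ← mul_assoc,
    prod_primeFactors_one_sub_inv_mul] at h
  rw [← hasMeanValue_ofReal_iff]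
  convert h using 1
  · ext n
    simp [one_dirichletCharacter_natCast, ite_and, apply_ite Complex.ofReal]
  · push_cast
    rfl

end TrivialCharacter

lemma squarefree_mul_and_coprime_iff {a b : ℕ} (ha : Squarefree a) (hab : a.Coprime b) (m : ℕ) :
    Squarefree (a * m) ∧ (a * m).Coprime b ↔ Squarefree m ∧ m.Coprime (a * b) := by
  rw [Nat.squarefree_mul_iff, Nat.coprime_mul_iff_left, Nat.coprime_mul_iff_right,
    Nat.coprime_comm (m := a)]
  tauto

lemma prod_primeFactors_mul_div_of_squarefree {a b : ℕ} (ha : Squarefree a) (hab : a.Coprime b) :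
    (∏ p ∈ (a * b).primeFactors, (p : ℝ) / (p + 1)) / a
      = (∏ p ∈ a.primeFactors, (1 : ℝ) / (p + 1)) * ∏ q ∈ b.primeFactors, (q : ℝ) / (q + 1) := by
  have ha0 : (a : ℝ) ≠ 0 := Nat.cast_ne_zero.mpr ha.ne_zero
  have hprod : (a : ℝ) = ∏ p ∈ a.primeFactors, (p : ℝ) := by
    rw [← Nat.cast_prod, Nat.prod_primeFactors_of_squarefree ha]
  rw [hab.primeFactors_mul, prod_union hab.disjoint_primeFactors, mul_div_right_comm]
  simp only [prod_div_distrib, ← hprod, prod_const_one]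
  field_simp

theorem hasMeanValue_squarefree_dvd_coprime {a b : ℕ} (ha : Squarefree a) (hb : b ≠ 0)
    (hab : a.Coprime b) :
    HasMeanValue (fun n => if Squarefree n ∧ a ∣ n ∧ n.Coprime b then (1 : ℝ) else 0)
      ((∏ p ∈ a.primeFactors, (1 : ℝ) / (p + 1)) * (∏ q ∈ b.primeFactors, (q : ℝ) / (q + 1))
        * (6 / Real.pi ^ 2)) := by
  have : NeZero (a * b) := ⟨mul_ne_zero ha.ne_zero hb⟩
  have h := (hasMeanValue_squarefree_coprime (a * b)).tendsto_sum_div a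
  rw [mul_div_right_comm, prod_primeFactors_mul_div_of_squarefree ha hab] at h
  refine h.congr fun X => ?_
  simp only [← squarefree_mul_and_coprime_iff ha hab]
  rw [← sum_Icc_filter_dvd (fun n => if Squarefree n ∧ n.Coprime b then (1 : ℝ) else 0)
    (Nat.pos_of_ne_zero ha.ne_zero), sum_filter]
  simp only [← ite_and, and_left_comm]

lemma squarefree_prod_of_forall_prime {P : Finset ℕ} (hP : ∀ p ∈ P, p.Prime) :
    Squarefree (∏ p ∈ P, p) :=
  squarefree_prod_of_pairwise_isCoprime
    (fun _ hp _ hq hpq => Nat.coprime_iff_isRelPrime.mp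
      ((Nat.coprime_primes (hP _ hp) (hP _ hq)).mpr hpq))
    fun p hp => (hP p hp).prime.squarefree

lemma prod_dvd_iff_of_forall_prime {P : Finset ℕ} (hP : ∀ p ∈ P, p.Prime) {n : ℕ} :
    ∏ p ∈ P, p ∣ n ↔ ∀ p ∈ P, p ∣ n :=
  ⟨fun h _ hp => (dvd_prod_of_mem _ hp).trans h, prod_primes_dvd n fun p hp => (hP p hp).prime⟩

lemma coprime_prod_iff_of_forall_prime {Q : Finset ℕ} (hQ : ∀ q ∈ Q, q.Prime) {n : ℕ} :
    n.Coprime (∏ q ∈ Q, q) ↔ ∀ q ∈ Q, ¬ q ∣ n := by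
  rw [Nat.coprime_prod_right_iff]
  exact forall₂_congr fun q hq => by rw [Nat.coprime_comm, (hQ q hq).coprime_iff_not_dvd]

/-- Let `P` and `Q` be two disjoint finite sets of primes. The natural density of the set of
squarefree positive integers divisible by every prime in `P` and by no prime in `Q` equals
`(∏_{p ∈ P} 1/(p+1)) · (∏_{q ∈ Q} q/(q+1)) · (6/π²)`. -/
theorem squarefree_with_divisibility_constraints_density
    (P Q : Finset ℕ) (hP : ∀ p ∈ P, p.Prime) (hQ : ∀ q ∈ Q, q.Prime)
    (hPQ : Disjoint P Q) :
    Filter.Tendsto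
      (fun X : ℕ =>
        (((Finset.Icc 1 X).filter fun n =>
            Squarefree n ∧ (∀ p ∈ P, p ∣ n) ∧ (∀ q ∈ Q, ¬ q ∣ n)).card : ℝ) / X)
      Filter.atTop
      (nhds ((∏ p ∈ P, (1 : ℝ) / (p + 1)) * (∏ q ∈ Q, (q : ℝ) / (q + 1))
        * (6 / Real.pi ^ 2))) := by
  have hcop : (∏ p ∈ P, p).Coprime (∏ q ∈ Q, q) :=
    Nat.Coprime.prod_left fun p hp => Nat.Coprime.prod_right fun q hq =>
      (Nat.coprime_primes (hP p hp) (hQ q hq)).mpr (hPQ.forall_ne_finset hp hq)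
  have h := hasMeanValue_squarefree_dvd_coprime (squarefree_prod_of_forall_prime hP)
    (squarefree_prod_of_forall_prime hQ).ne_zero hcop
  simpa only [HasMeanValue, Nat.primeFactors_prod hP, Nat.primeFactors_prod hQ,
    prod_dvd_iff_of_forall_prime hP, coprime_prod_iff_of_forall_prime hQ, sum_boole] using h
end
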